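/- Let p, ν ∈ ℕ with 0 ≤ p ≤ ν. Define A(τ) := (1−τ²)^{p}·P_ν^{(p)}(τ) and B(τ) := (1−τ²)^{p}·q_ν^{(p)}(τ) on (−1,1). Then A and B both satisfy the master ODE (1−τ²)·a″(τ) + 2(p−1)·τ·a′(τ) + (ν(ν+1) − p(p−1))·a(τ) = 0 on (−1,1), they are linearly independent, and every twice-differentiable solution of this ODE on (−1,1) can be written as C·A + D·B for unique constants C, D ∈ ℝ. -/

import Mathlib

/-- The Legendre polynomial `P_ν` via the Rodrigues formula. -/
noncomputable def legendreP (ν : ℕ) (τ : ℝ) : ℝ :=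
  ((-1 : ℝ) ^ ν / (2 ^ ν * Nat.factorial ν)) *
    iteratedDeriv ν (fun t : ℝ => (1 - t ^ 2) ^ ν) τ

/-- The polynomial `W_{ν-1}` (with `W_{-1} = 0`): `legendreW ν` denotes `W_{ν-1}`. -/
noncomputable def legendreW (ν : ℕ) (τ : ℝ) : ℝ :=
  if ν = 0 then 0 else
    ∑ i ∈ Finset.range ((ν - 1) / 2 + 1),
      ((2 * (ν : ℝ) - 4 * (i : ℝ) - 1) / (((ν : ℝ) - (i : ℝ)) * (2 * (i : ℝ) + 1))) *
        legendreP (ν - 2 * i - 1) τ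

/-- The Legendre function of the second kind `q_ν` on `(-1,1)`. -/
noncomputable def legendreQ (ν : ℕ) (τ : ℝ) : ℝ :=
  (1 / 2) * legendreP ν τ * Real.log ((1 + τ) / (1 - τ)) - legendreW ν τ

/-!
Differentiating the Legendre equation `p` times and substituting `a = (1 - τ²)^p h` gives the master
equation, so `A` and `B` are solutions as soon as `P_ν` and `q_ν` solve the Legendre equation. For
`q_ν = P_ν artanh - W_{ν-1}` this amounts to the inhomogeneous equation
`((1 - τ²) W')' + ν (ν + 1) W = 2 P_ν'` for `W = W_{ν-1}`, which follows from the expansion of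
`P_ν'` in Legendre polynomials.

The Wronskian of `P_ν` and `q_ν` is `1 / (1 - τ²)`, and each differentiation multiplies a Wronskian
by a factor `(ν (ν + 1) - j (j + 1)) / (1 - τ²)`, nonzero for `j < ν`. Hence the Wronskian of `A`
and `B` vanishes nowhere. By Abel's identity any two Wronskians of solutions are proportional, so in
`a = (W(a, B) / W(A, B)) A + (W(A, a) / W(A, B)) B` the coefficients are constant.
-/

open Set Filter
open scoped Topology Polynomial
open Polynomial (C X derivative eval)

section SecondOrder

variable {𝕜 : Type*} [NontriviallyNormedField 𝕜] {α β γ : 𝕜 → 𝕜} {s : Set 𝕜} {x : 𝕜}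
  {y z : 𝕜 → 𝕜}

/-- `y` is a twice differentiable solution on `s` of the homogeneous linear second-order equation
`α y'' + β y' + γ y = 0`. Derivatives are taken in `𝕜`, not within `s`, so the notion is meant for
open `s`. -/
structure IsSolutionOn (α β γ : 𝕜 → 𝕜) (s : Set 𝕜) (y : 𝕜 → 𝕜) : Prop where
  differentiableAt : ∀ x ∈ s, DifferentiableAt 𝕜 y x
  differentiableAt_deriv : ∀ x ∈ s, DifferentiableAt 𝕜 (deriv y) x
  eq_zero : ∀ x ∈ s, α x * deriv (deriv y) x + β x * deriv y x + γ x * y x = 0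

/-- The Wronskian `y z' - y' z` of two functions of one variable. -/
noncomputable def wronskian (y z : 𝕜 → 𝕜) (x : 𝕜) : 𝕜 :=
  y x * deriv z x - deriv y x * z x

theorem IsSolutionOn.of_hasDerivAt {y' y'' : 𝕜 → 𝕜} (hs : IsOpen s)
    (hy : ∀ x ∈ s, HasDerivAt y (y' x) x) (hy' : ∀ x ∈ s, HasDerivAt y' (y'' x) x)
    (heq : ∀ x ∈ s, α x * y'' x + β x * y' x + γ x * y x = 0) : IsSolutionOn α β γ s y := by
  have hderiv : EqOn (deriv y) y' s := fun x hx => (hy x hx).deriv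
  have hderiv2 : ∀ x ∈ s, HasDerivAt (deriv y) (y'' x) x := fun x hx =>
    (hy' x hx).congr_of_eventuallyEq (hderiv.eventuallyEq_of_mem (hs.mem_nhds hx))
  refine ⟨fun x hx => (hy x hx).differentiableAt, fun x hx => (hderiv2 x hx).differentiableAt, ?_⟩
  intro x hx
  rw [(hderiv2 x hx).deriv, hderiv hx, heq x hx]

theorem IsSolutionOn.const_mul (hs : IsOpen s) (hy : IsSolutionOn α β γ s y) (c : 𝕜) :
    IsSolutionOn α β γ s fun x => c * y x :=
  .of_hasDerivAt hs (fun x hx => (hy.differentiableAt x hx).hasDerivAt.const_mul c)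
    (fun x hx => (hy.differentiableAt_deriv x hx).hasDerivAt.const_mul c)
    fun x hx => by linear_combination c * hy.eq_zero x hx

theorem IsSolutionOn.hasDerivAt_wronskian (hy : IsSolutionOn α β γ s y)
    (hz : IsSolutionOn α β γ s z) (hx : x ∈ s) :
    HasDerivAt (wronskian y z) (y x * deriv (deriv z) x - deriv (deriv y) x * z x) x :=
  (((hy.differentiableAt x hx).hasDerivAt.mul (hz.differentiableAt_deriv x hx).hasDerivAt).sub
    ((hy.differentiableAt_deriv x hx).hasDerivAt.mul
      (hz.differentiableAt x hx).hasDerivAt)).congr_deriv (by ring)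

theorem IsSolutionOn.mul_deriv_wronskian (hy : IsSolutionOn α β γ s y)
    (hz : IsSolutionOn α β γ s z) (hx : x ∈ s) :
    α x * deriv (wronskian y z) x = -β x * wronskian y z x := by
  rw [(hy.hasDerivAt_wronskian hz hx).deriv, wronskian]
  linear_combination y x * hz.eq_zero x hx - z x * hy.eq_zero x hx

theorem wronskian_mul_left {g : 𝕜 → 𝕜} (hg : DifferentiableAt 𝕜 g x)
    (hy : DifferentiableAt 𝕜 y x) (hz : DifferentiableAt 𝕜 z x) :
    wronskian (fun t => g t * y t) (fun t => g t * z t) x = g x ^ 2 * wronskian y z x := by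
  simp only [wronskian, deriv_fun_mul hg hy, deriv_fun_mul hg hz]
  ring

theorem eq_zero_and_eq_zero_of_wronskian_ne_zero (hs : s ∈ 𝓝 x) (hy : DifferentiableAt 𝕜 y x)
    (hz : DifferentiableAt 𝕜 z x) (hW : wronskian y z x ≠ 0) {a b : 𝕜}
    (h : ∀ t ∈ s, a * y t + b * z t = 0) : a = 0 ∧ b = 0 := by
  have hx : a * y x + b * z x = 0 := h x (mem_of_mem_nhds hs)
  have hx' : a * deriv y x + b * deriv z x = 0 := by
    have hsum := (hy.hasDerivAt.const_mul a).add (hz.hasDerivAt.const_mul b)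
    have hzero : (fun t => a * y t + b * z t) =ᶠ[𝓝 x] fun _ => 0 := eventually_of_mem hs h
    exact (hsum.congr_of_eventuallyEq hzero.symm).unique (hasDerivAt_const x 0)
  have ha : wronskian y z x * a = 0 := by
    rw [wronskian]; linear_combination deriv z x * hx - z x * hx'
  have hb : wronskian y z x * b = 0 := by
    rw [wronskian]; linear_combination y x * hx' - deriv y x * hx
  exact ⟨(mul_eq_zero.1 ha).resolve_left hW, (mul_eq_zero.1 hb).resolve_left hW⟩

end SecondOrder

section FundamentalSystem

variable {𝕜 : Type*} [RCLike 𝕜] {α β γ : 𝕜 → 𝕜} {s : Set 𝕜} {u v y z : 𝕜 → 𝕜}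

theorem IsSolutionOn.exists_wronskian_eq_mul (hs : IsOpen s) (hs' : IsPreconnected s)
    (hα : ∀ x ∈ s, α x ≠ 0) (hu : IsSolutionOn α β γ s u) (hv : IsSolutionOn α β γ s v)
    (hy : IsSolutionOn α β γ s y) (hz : IsSolutionOn α β γ s z)
    (hW : ∀ x ∈ s, wronskian y z x ≠ 0) :
    ∃ c, ∀ x ∈ s, wronskian u v x = c * wronskian y z x := by
  have hquot : ∀ x ∈ s, HasDerivAt (fun t => wronskian u v t / wronskian y z t) 0 x := by
    intro x hx
    have huv := (hu.hasDerivAt_wronskian hv hx).differentiableAt.hasDerivAt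
    have hyz := (hy.hasDerivAt_wronskian hz hx).differentiableAt.hasDerivAt
    refine (huv.fun_div hyz (hW x hx)).congr_deriv ?_
    rw [div_eq_zero_iff]
    left
    apply mul_left_cancel₀ (hα x hx)
    linear_combination wronskian y z x * hu.mul_deriv_wronskian hv hx
      - wronskian u v x * hy.mul_deriv_wronskian hz hx
  obtain ⟨c, hc⟩ := hs.exists_is_const_of_deriv_eq_zero hs'
    (fun x hx => (hquot x hx).differentiableAt.differentiableWithinAt)
    (fun x hx => (hquot x hx).deriv)
  exact ⟨c, fun x hx => (div_eq_iff (hW x hx)).1 (hc x hx)⟩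

theorem IsSolutionOn.exists_eq_linearCombination (hs : IsOpen s) (hs' : IsPreconnected s)
    (hα : ∀ x ∈ s, α x ≠ 0) (hy : IsSolutionOn α β γ s y) (hz : IsSolutionOn α β γ s z)
    (hW : ∀ x ∈ s, wronskian y z x ≠ 0) (hu : IsSolutionOn α β γ s u) :
    ∃ a b, ∀ x ∈ s, u x = a * y x + b * z x := by
  obtain ⟨a, ha⟩ := exists_wronskian_eq_mul hs hs' hα hu hz hy hz hW
  obtain ⟨b, hb⟩ := exists_wronskian_eq_mul hs hs' hα hy hu hy hz hW
  refine ⟨a, b, fun x hx => mul_left_cancel₀ (hW x hx) ?_⟩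
  calc wronskian y z x * u x = wronskian u z x * y x + wronskian y u x * z x := by
        simp only [wronskian]; ring
    _ = wronskian y z x * (a * y x + b * z x) := by rw [ha x hx, hb x hx]; ring

theorem IsSolutionOn.existsUnique_eq_linearCombination (hs : IsOpen s) (hs' : IsConnected s)
    (hα : ∀ x ∈ s, α x ≠ 0) (hy : IsSolutionOn α β γ s y) (hz : IsSolutionOn α β γ s z)
    (hW : ∀ x ∈ s, wronskian y z x ≠ 0) (hu : IsSolutionOn α β γ s u) :
    ∃! c : 𝕜 × 𝕜, ∀ x ∈ s, u x = c.1 * y x + c.2 * z x := by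
  obtain ⟨a, b, hab⟩ := hy.exists_eq_linearCombination hs hs'.isPreconnected hα hz hW hu
  refine ⟨(a, b), hab, fun ⟨a', b'⟩ hab' => ?_⟩
  obtain ⟨x, hx⟩ := hs'.nonempty
  have hdiff : ∀ t ∈ s, (a' - a) * y t + (b' - b) * z t = 0 := fun t ht => by
    linear_combination hab t ht - hab' t ht
  obtain ⟨ha, hb⟩ := eq_zero_and_eq_zero_of_wronskian_ne_zero (hs.mem_nhds hx)
    (hy.differentiableAt x hx) (hz.differentiableAt x hx) (hW x hx) hdiff
  exact Prod.ext (sub_eq_zero.1 ha) (sub_eq_zero.1 hb)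

end FundamentalSystem

section Gegenbauer

variable {b c x : ℝ} {y z : ℝ → ℝ}

theorem one_sub_sq_ne_zero (hx : x ∈ Ioo (-1 : ℝ) 1) : 1 - x ^ 2 ≠ 0 := by
  have := hx.1
  have := hx.2
  nlinarith

theorem hasDerivAt_one_sub_sq (x : ℝ) : HasDerivAt (fun t : ℝ => 1 - t ^ 2) (-(2 * x)) x := by
  simpa using (hasDerivAt_pow 2 x).const_sub 1

/-- `y` solves the Gegenbauer (ultraspherical) equation `(1 - x²) y'' + b x y' + c y = 0` on
`(-1, 1)`. The Legendre equation of degree `n` is `b = -2`, `c = n (n + 1)`; the master equation is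
`b = 2 (p - 1)`, `c = λ - p (p - 1)`. -/
abbrev IsGegenbauerSolution (b c : ℝ) (y : ℝ → ℝ) : Prop :=
  IsSolutionOn (fun x => 1 - x ^ 2) (fun x => b * x) (fun _ => c) (Ioo (-1) 1) y

namespace IsGegenbauerSolution

theorem differentiableAt_deriv_deriv (hy : IsGegenbauerSolution b c y)
    (hx : x ∈ Ioo (-1 : ℝ) 1) : DifferentiableAt ℝ (deriv (deriv y)) x := by
  have hsolve : EqOn (deriv (deriv y)) (fun t => -(b * t * deriv y t + c * y t) / (1 - t ^ 2))
      (Ioo (-1) 1) := fun t ht => by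
    rw [eq_div_iff (one_sub_sq_ne_zero ht)]
    linear_combination hy.eq_zero t ht
  have hy0 := hy.differentiableAt x hx
  have hy1 := hy.differentiableAt_deriv x hx
  have hne := one_sub_sq_ne_zero hx
  refine DifferentiableAt.congr_of_eventuallyEq ?_
    (hsolve.eventuallyEq_of_mem (isOpen_Ioo.mem_nhds hx))
  fun_prop (disch := assumption)

protected theorem deriv (hy : IsGegenbauerSolution b c y) :
    IsGegenbauerSolution (b - 2) (c + b) (deriv y) := by
  refine ⟨hy.differentiableAt_deriv, fun x hx => hy.differentiableAt_deriv_deriv hx, ?_⟩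
  intro x hx
  have h0 := (hy.differentiableAt x hx).hasDerivAt.const_mul c
  have h1 := ((hasDerivAt_id x).const_mul b).mul (hy.differentiableAt_deriv x hx).hasDerivAt
  have h2 := (hasDerivAt_one_sub_sq x).mul (hy.differentiableAt_deriv_deriv hx).hasDerivAt
  have hzero : EqOn 0 (fun t => (1 - t ^ 2) * deriv (deriv y) t + b * t * deriv y t + c * y t)
      (Ioo (-1) 1) := fun t ht => (hy.eq_zero t ht).symm
  have hlhs := ((h2.add h1).add h0).congr_of_eventuallyEq
    (hzero.eventuallyEq_of_mem (isOpen_Ioo.mem_nhds hx))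
  have := hlhs.unique (hasDerivAt_const x 0)
  simp only [id] at this
  linear_combination this

protected theorem iteratedDeriv (hy : IsGegenbauerSolution b c y) (k : ℕ) :
    IsGegenbauerSolution (b - 2 * k) (c + k * b - k * (k - 1)) (iteratedDeriv k y) := by
  induction k with
  | zero => simpa using hy
  | succ k ih =>
    rw [iteratedDeriv_succ]
    convert! ih.deriv using 1 <;> push_cast <;> ring

theorem one_sub_sq_mul_wronskian_deriv (hy : IsGegenbauerSolution b c y)
    (hz : IsGegenbauerSolution b c z) (hx : x ∈ Ioo (-1 : ℝ) 1) :
    (1 - x ^ 2) * wronskian (deriv y) (deriv z) x = c * wronskian y z x := by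
  rw [wronskian, wronskian]
  linear_combination deriv y x * hz.eq_zero x hx - deriv z x * hy.eq_zero x hx

theorem one_sub_sq_pow_mul_wronskian_iteratedDeriv (hy : IsGegenbauerSolution b c y)
    (hz : IsGegenbauerSolution b c z) (k : ℕ) (hx : x ∈ Ioo (-1 : ℝ) 1) :
    (1 - x ^ 2) ^ k * wronskian (iteratedDeriv k y) (iteratedDeriv k z) x =
      (∏ j ∈ Finset.range k, (c + j * b - j * (j - 1))) * wronskian y z x := by
  induction k with
  | zero => simp
  | succ k ih =>
    rw [iteratedDeriv_succ, iteratedDeriv_succ, Finset.prod_range_succ, pow_succ, mul_assoc,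
      one_sub_sq_mul_wronskian_deriv (hy.iteratedDeriv k) (hz.iteratedDeriv k) hx]
    linear_combination (c + k * b - k * (k - 1)) * ih

end IsGegenbauerSolution

theorem hasDerivAt_one_sub_sq_pow_mul {f : ℝ → ℝ} {f' : ℝ} (hf : HasDerivAt f f' x) (p : ℕ)
    (hx : x ∈ Ioo (-1 : ℝ) 1) :
    HasDerivAt (fun t => (1 - t ^ 2) ^ p * f t)
      ((1 - x ^ 2) ^ p * (f' - 2 * p * x * f x / (1 - x ^ 2))) x := by
  refine (((hasDerivAt_one_sub_sq x).pow p).mul hf).congr_deriv ?_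
  have hne := one_sub_sq_ne_zero hx
  cases p with
  | zero => simp
  | succ p =>
    simp only [Nat.add_sub_cancel, Pi.pow_apply]
    field_simp
    ring

namespace IsGegenbauerSolution

theorem one_sub_sq_pow_mul {p : ℕ} (hy : IsGegenbauerSolution (-2 * (p + 1)) c y) :
    IsGegenbauerSolution (2 * (p - 1)) (c + 2 * p) fun x => (1 - x ^ 2) ^ p * y x := by
  have hy0 x hx := (hy.differentiableAt x hx).hasDerivAt
  have hy1 x hx := (hy.differentiableAt_deriv x hx).hasDerivAt
  refine .of_hasDerivAt isOpen_Ioo (fun x hx => hasDerivAt_one_sub_sq_pow_mul (hy0 x hx) p hx)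
    (fun x hx => hasDerivAt_one_sub_sq_pow_mul ((hy1 x hx).sub
      ((((hasDerivAt_id x).const_mul (2 * (p : ℝ))).mul (hy0 x hx)).div
        (hasDerivAt_one_sub_sq x) (one_sub_sq_ne_zero hx))) p hx) fun x hx => ?_
  have hne := one_sub_sq_ne_zero hx
  simp only [id, Pi.sub_apply, Pi.mul_apply, Pi.div_apply]
  field_simp
  linear_combination (1 - x ^ 2) ^ (p + 1) * hy.eq_zero x hx

theorem one_sub_sq_pow_mul_iteratedDeriv (hy : IsGegenbauerSolution (-2) c y) (p : ℕ) :
    IsGegenbauerSolution (2 * (p - 1)) (c - p * (p - 1))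
      fun x => (1 - x ^ 2) ^ p * iteratedDeriv p y x := by
  have hyp : IsGegenbauerSolution (-2 * (p + 1)) (c - p * (p + 1)) (iteratedDeriv p y) := by
    convert! hy.iteratedDeriv p using 1 <;> ring
  convert! hyp.one_sub_sq_pow_mul using 1
  ring

theorem wronskian_one_sub_sq_pow_mul_iteratedDeriv (hy : IsGegenbauerSolution b c y)
    (hz : IsGegenbauerSolution b c z) (p : ℕ) (hx : x ∈ Ioo (-1 : ℝ) 1) :
    wronskian (fun t => (1 - t ^ 2) ^ p * iteratedDeriv p y t)
        (fun t => (1 - t ^ 2) ^ p * iteratedDeriv p z t) x =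
      (1 - x ^ 2) ^ p * ((∏ j ∈ Finset.range p, (c + j * b - j * (j - 1))) * wronskian y z x) := by
  have hdiff : DifferentiableAt ℝ (fun t : ℝ => (1 - t ^ 2) ^ p) x := by fun_prop
  rw [wronskian_mul_left hdiff ((hy.iteratedDeriv p).differentiableAt x hx)
    ((hz.iteratedDeriv p).differentiableAt x hx),
    ← hy.one_sub_sq_pow_mul_wronskian_iteratedDeriv hz p hx]
  ring

end IsGegenbauerSolution

end Gegenbauer

section LegendreOperator

variable {R : Type*} [CommRing R]

/-- The Legendre operator `f ↦ ((1 - X²) f')'`, of which `P_n` is an eigenvector for the eigenvalue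
`-n (n + 1)`. -/
noncomputable def legendreOperator : R[X] →ₗ[R] R[X] :=
  derivative ∘ₗ LinearMap.mulLeft R (1 - X ^ 2) ∘ₗ derivative

theorem legendreOperator_apply (f : R[X]) :
    legendreOperator f = (1 - X ^ 2) * derivative (derivative f) - 2 * X * derivative f := by
  simp only [legendreOperator, LinearMap.comp_apply, LinearMap.mulLeft_apply,
    Polynomial.derivative_mul, map_sub, Polynomial.derivative_one, Polynomial.derivative_X_sq,
    map_ofNat]
  ring

theorem derivative_one_sub_X_sq_mul_wronskian (f g : R[X]) :
    derivative ((1 - X ^ 2) * Polynomial.wronskian f g) =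
      f * legendreOperator g - g * legendreOperator f := by
  simp only [legendreOperator_apply, Polynomial.wronskian, Polynomial.derivative_mul, map_sub,
    Polynomial.derivative_one, Polynomial.derivative_X_sq, map_ofNat]
  ring

theorem derivative_derivative_one_sub_X_sq_pow (n : ℕ) :
    derivative (derivative ((1 - X ^ 2 : R[X]) ^ (n + 2))) =
      (-2 * (n + 2) * (2 * n + 3) : R) • (1 - X ^ 2) ^ (n + 1) +
        (4 * (n + 1) * (n + 2) : R) • (1 - X ^ 2) ^ n := by
  have hderiv (m : ℕ) : derivative ((1 - X ^ 2 : R[X]) ^ (m + 1)) =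
      C (-2 * (m + 1) : R) * (X * (1 - X ^ 2) ^ m) := by
    rw [Polynomial.derivative_pow_succ, map_sub, Polynomial.derivative_one,
      Polynomial.derivative_X_sq]
    simp only [map_mul, map_neg, map_ofNat]
    ring
  rw [hderiv, Polynomial.derivative_C_mul, Polynomial.derivative_mul, Polynomial.derivative_X,
    hderiv]
  simp only [Polynomial.smul_eq_C_mul, map_add, map_mul, map_neg, map_natCast, map_one, map_ofNat]
  push_cast
  ring

end LegendreOperator

section LegendrePolynomial

theorem iteratedDeriv_polynomial_eval {𝕜 : Type*} [NontriviallyNormedField 𝕜] (f : 𝕜[X]) (n : ℕ) :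
    iteratedDeriv n (fun t => eval t f) = fun t => eval t (derivative^[n] f) := by
  have hsemiconj : Function.Semiconj (fun (g : 𝕜[X]) t => eval t g) derivative deriv :=
    fun g => funext fun t => g.deriv.symm
  rw [iteratedDeriv_eq_iterate]
  exact (hsemiconj.iterate_right n f).symm

/-- The Legendre polynomial `P_n` as an element of `ℝ[X]`. -/
noncomputable def legendrePoly (n : ℕ) : ℝ[X] :=
  ((-1 : ℝ) ^ n / (2 ^ n * n.factorial)) • derivative^[n] ((1 - X ^ 2) ^ n)

theorem legendrePoly_zero : legendrePoly 0 = 1 := by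
  simp [legendrePoly]

theorem legendrePoly_one : legendrePoly 1 = X := by
  norm_num [legendrePoly, Polynomial.smul_eq_C_mul, ← mul_assoc, ← map_ofNat C, ← map_mul]

theorem legendreP_eq_eval (n : ℕ) : legendreP n = fun t => eval t (legendrePoly n) := by
  have heval : (fun t : ℝ => (1 - t ^ 2) ^ n) = fun t => eval t ((1 - X ^ 2) ^ n) := by simp
  funext t
  rw [legendreP, heval, iteratedDeriv_polynomial_eval, legendrePoly, Polynomial.eval_smul,
    smul_eq_mul]

theorem isGegenbauerSolution_legendreP (n : ℕ) :
    IsGegenbauerSolution (-2) (n * (n + 1)) (legendreP n) := by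
  have hone : IsGegenbauerSolution (-2 * (n + 1)) 0 fun _ => 1 :=
    .of_hasDerivAt isOpen_Ioo (fun x _ => hasDerivAt_const x 1) (fun x _ => hasDerivAt_const x 0)
      fun x _ => by ring
  have hpow : IsGegenbauerSolution (2 * (n - 1)) (2 * n) fun t => (1 - t ^ 2) ^ n := by
    simpa only [mul_one, zero_add] using hone.one_sub_sq_pow_mul
  have hrodrigues : IsGegenbauerSolution (-2) (n * (n + 1))
      (iteratedDeriv n fun t => (1 - t ^ 2) ^ n) := by
    convert! hpow.iteratedDeriv n using 1 <;> ring
  exact hrodrigues.const_mul isOpen_Ioo _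

theorem legendreOperator_legendrePoly (n : ℕ) :
    legendreOperator (legendrePoly n) = -(n * (n + 1) : ℝ) • legendrePoly n := by
  refine Polynomial.eq_of_infinite_eval_eq _ _ <|
    (Ioo_infinite (by norm_num : (-1 : ℝ) < 1)).mono fun x hx => ?_
  have hderiv (f : ℝ[X]) : deriv (fun t => eval t f) = fun t => eval t (derivative f) :=
    funext fun t => f.deriv
  have hode := (isGegenbauerSolution_legendreP n).eq_zero x hx
  simp only [legendreP_eq_eval, hderiv] at hode
  simp only [mem_ofPred_eq, legendreOperator_apply, Polynomial.eval_sub, Polynomial.eval_mul,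
    Polynomial.eval_one, Polynomial.eval_pow, Polynomial.eval_X, Polynomial.eval_ofNat,
    Polynomial.eval_smul, smul_eq_mul]
  linear_combination hode

theorem eval_one_legendrePoly (n : ℕ) : eval 1 (legendrePoly n) = 1 := by
  have hfactor : ((1 - X ^ 2) ^ n : ℝ[X]) = (X - C 1) ^ n * (-(X + 1)) ^ n := by
    rw [← mul_pow, map_one]; ring
  have hderiv : eval 1 (derivative^[n] ((1 - X ^ 2) ^ n : ℝ[X])) = n.factorial * (-2) ^ n := by
    have htaylor := Polynomial.aeval_iterate_derivative_self ((1 - X ^ 2) ^ n : ℝ[X]) n (1 : ℝ)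
      (by rw [Algebra.algebraMap_self, Polynomial.map_id, hfactor])
    rw [Polynomial.coe_aeval_eq_eval] at htaylor
    rw [htaylor]
    norm_num
  have hsign : (-1 : ℝ) ^ n * (-1) ^ n = 1 := by rw [← mul_pow]; norm_num
  rw [legendrePoly, Polynomial.eval_smul, hderiv, smul_eq_mul, neg_pow 2]
  field_simp
  linear_combination hsign

theorem derivative_legendrePoly_add_two (n : ℕ) :
    derivative (legendrePoly (n + 2)) =
      (2 * n + 3 : ℝ) • legendrePoly (n + 1) + derivative (legendrePoly n) := by
  have hsplit : derivative^[n + 3] ((1 - X ^ 2 : ℝ[X]) ^ (n + 2)) =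
      (-2 * (n + 2) * (2 * n + 3) : ℝ) • derivative^[n + 1] ((1 - X ^ 2) ^ (n + 1)) +
        (4 * (n + 1) * (n + 2) : ℝ) • derivative^[n + 1] ((1 - X ^ 2) ^ n) := by
    rw [Function.iterate_succ_apply, Function.iterate_succ_apply,
      derivative_derivative_one_sub_X_sq_pow, iterate_map_add, Polynomial.iterate_derivative_smul,
      Polynomial.iterate_derivative_smul]
  simp only [legendrePoly, Polynomial.derivative_smul, ← Function.iterate_succ_apply' derivative,
    Nat.succ_eq_add_one, hsplit, smul_add, smul_smul]
  congr 2
  all_goals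
    simp only [Nat.factorial_succ, pow_succ]
    push_cast
    field_simp
    ring

theorem derivative_legendrePoly_eq_sum (n : ℕ) :
    derivative (legendrePoly n) = ∑ i ∈ Finset.range ((n + 1) / 2),
      (2 * n - 4 * i - 1 : ℝ) • legendrePoly (n - 2 * i - 1) := by
  induction n using Nat.twoStepInduction with
  | zero => simp [legendrePoly_zero]
  | one => norm_num [legendrePoly_zero, legendrePoly_one]
  | more n ih _ =>
    rw [derivative_legendrePoly_add_two, ih, show (n + 2 + 1) / 2 = (n + 1) / 2 + 1 by lia,
      Finset.sum_range_succ', add_comm]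
    congr 1
    · refine Finset.sum_congr rfl fun i _ => ?_
      rw [show n + 2 - 2 * (i + 1) - 1 = n - 2 * i - 1 by lia]
      congr 1
      push_cast
      ring
    · rw [show n + 2 - 2 * 0 - 1 = n + 1 by lia]
      congr 1
      push_cast
      ring

/-- The polynomial `W_{n-1}` as an element of `ℝ[X]`; the index is shifted as in `legendreW`. -/
noncomputable def legendreWPoly (n : ℕ) : ℝ[X] :=
  ∑ i ∈ Finset.range ((n + 1) / 2),
    ((2 * n - 4 * i - 1) / ((n - i) * (2 * i + 1)) : ℝ) • legendrePoly (n - 2 * i - 1)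

theorem legendreW_eq_eval (n : ℕ) : legendreW n = fun t => eval t (legendreWPoly n) := by
  funext t
  rcases n.eq_zero_or_pos with rfl | hn
  · simp [legendreW, legendreWPoly]
  · rw [legendreW, if_neg hn.ne', legendreWPoly, Polynomial.eval_finsetSum,
      show (n - 1) / 2 + 1 = (n + 1) / 2 by lia]
    simp only [legendreP_eq_eval, Polynomial.eval_smul, smul_eq_mul]

theorem legendreOperator_legendreWPoly (n : ℕ) :
    legendreOperator (legendreWPoly n) =
      (2 : ℝ) • derivative (legendrePoly n) - (n * (n + 1) : ℝ) • legendreWPoly n := by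
  rw [legendreWPoly, map_sum, derivative_legendrePoly_eq_sum, Finset.smul_sum, Finset.smul_sum,
    ← Finset.sum_sub_distrib]
  refine Finset.sum_congr rfl fun i hi => ?_
  have hlt : 2 * i + 1 ≤ n := by have := Finset.mem_range.1 hi; lia
  have hcast : ((n - 2 * i - 1 : ℕ) : ℝ) = n - 2 * i - 1 := by
    rw [Nat.sub_sub, Nat.cast_sub hlt]; push_cast; ring
  have hne : (n - i : ℝ) ≠ 0 := sub_ne_zero.2 (by norm_cast; lia)
  have hne' : (2 * i + 1 : ℝ) ≠ 0 := by positivity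
  -- For `m = n - 2 i - 1` the eigenvalue difference `n (n + 1) - m (m + 1) = 2 (n - i) (2 i + 1)`
  -- cancels the denominators of `W_{n-1}`.
  rw [map_smul, legendreOperator_legendrePoly, smul_smul, smul_smul, smul_smul, ← sub_smul, hcast]
  congr 1
  field_simp
  ring

theorem legendrePoly_sq_sub_wronskian (n : ℕ) :
    legendrePoly n ^ 2 -
      (1 - X ^ 2) * Polynomial.wronskian (legendrePoly n) (legendreWPoly n) = 1 := by
  have hderiv : derivative (legendrePoly n ^ 2 -
      (1 - X ^ 2) * Polynomial.wronskian (legendrePoly n) (legendreWPoly n)) = 0 := by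
    rw [map_sub, derivative_one_sub_X_sq_mul_wronskian, legendreOperator_legendreWPoly,
      legendreOperator_legendrePoly, Polynomial.derivative_sq]
    simp only [Polynomial.smul_eq_C_mul, map_neg, map_ofNat]
    ring
  obtain ⟨c, hc⟩ : ∃ c, _ = C c := ⟨_, Polynomial.eq_C_of_derivative_eq_zero hderiv⟩
  have hone := congrArg (eval 1) hc
  simp only [Polynomial.eval_sub, Polynomial.eval_mul, Polynomial.eval_pow, Polynomial.eval_one,
    Polynomial.eval_X, Polynomial.eval_C, eval_one_legendrePoly, one_pow, sub_self, zero_mul,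
    sub_zero] at hone
  rw [hc, ← hone, map_one]

end LegendrePolynomial

section LegendreSecondKind

variable {x : ℝ}

theorem hasDerivAt_artanh (hx : x ∈ Ioo (-1 : ℝ) 1) :
    HasDerivAt Real.artanh (1 / (1 - x ^ 2)) x := by
  have hadd : 1 + x ≠ 0 := by linarith [hx.1]
  have hsub : 1 - x ≠ 0 := by linarith [hx.2]
  have hlog := ((((hasDerivAt_id x).const_add 1).div ((hasDerivAt_id x).const_sub 1) hsub).log
    (div_ne_zero hadd hsub)).const_mul (1 / 2)
  have heq : Real.artanh =ᶠ[𝓝 x] fun t => 1 / 2 * Real.log ((1 + t) / (1 - t)) :=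
    eventually_of_mem (isOpen_Ioo.mem_nhds hx) fun t ht =>
      Real.artanh_eq_half_log (Ioo_subset_Icc_self ht)
  refine (hlog.congr_of_eventuallyEq heq).congr_deriv ?_
  have hne := one_sub_sq_ne_zero hx
  simp only [id, Pi.div_apply]
  field_simp
  ring

theorem legendreQ_eq_artanh (n : ℕ) (hx : x ∈ Ioo (-1 : ℝ) 1) :
    legendreQ n x = eval x (legendrePoly n) * Real.artanh x - eval x (legendreWPoly n) := by
  simp only [legendreQ, legendreP_eq_eval, legendreW_eq_eval,
    Real.artanh_eq_half_log (Ioo_subset_Icc_self hx)]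
  ring

theorem hasDerivAt_legendreQ (n : ℕ) (hx : x ∈ Ioo (-1 : ℝ) 1) :
    HasDerivAt (legendreQ n)
      (eval x (derivative (legendrePoly n)) * Real.artanh x
        + eval x (legendrePoly n) * (1 / (1 - x ^ 2))
        - eval x (derivative (legendreWPoly n))) x := by
  have heq : EqOn (legendreQ n)
      (fun t => eval t (legendrePoly n) * Real.artanh t - eval t (legendreWPoly n))
      (Ioo (-1) 1) := fun t ht => legendreQ_eq_artanh n ht
  exact (((legendrePoly n).hasDerivAt x).mul (hasDerivAt_artanh hx) |>.sub
    ((legendreWPoly n).hasDerivAt x)).congr_of_eventuallyEq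
      (heq.eventuallyEq_of_mem (isOpen_Ioo.mem_nhds hx))

theorem isGegenbauerSolution_legendreQ (n : ℕ) :
    IsGegenbauerSolution (-2) (n * (n + 1)) (legendreQ n) := by
  refine .of_hasDerivAt isOpen_Ioo (fun x hx => hasDerivAt_legendreQ n hx) (fun x hx =>
    (((derivative (legendrePoly n)).hasDerivAt x).mul (hasDerivAt_artanh hx)).add
      (((legendrePoly n).hasDerivAt x).mul ((hasDerivAt_const x 1).div (hasDerivAt_one_sub_sq x)
        (one_sub_sq_ne_zero hx))) |>.sub ((derivative (legendreWPoly n)).hasDerivAt x)) ?_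
  intro x hx
  have hP := congrArg (eval x) (legendreOperator_legendrePoly n)
  have hW := congrArg (eval x) (legendreOperator_legendreWPoly n)
  simp only [legendreOperator_apply, Polynomial.eval_sub, Polynomial.eval_mul, Polynomial.eval_one,
    Polynomial.eval_pow, Polynomial.eval_X, Polynomial.eval_ofNat, Polynomial.eval_smul,
    smul_eq_mul] at hP hW
  have hne := one_sub_sq_ne_zero hx
  rw [legendreQ_eq_artanh n hx]
  simp only [Pi.div_apply]
  field_simp
  linear_combination (1 - x ^ 2) * (Real.artanh x * hP - hW)

theorem one_sub_sq_mul_wronskian_legendreP_legendreQ (n : ℕ) (hx : x ∈ Ioo (-1 : ℝ) 1) :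
    (1 - x ^ 2) * wronskian (legendreP n) (legendreQ n) x = 1 := by
  have hLagrange := congrArg (eval x) (legendrePoly_sq_sub_wronskian n)
  simp only [Polynomial.wronskian, Polynomial.eval_sub, Polynomial.eval_mul, Polynomial.eval_one,
    Polynomial.eval_pow, Polynomial.eval_X] at hLagrange
  rw [wronskian, (hasDerivAt_legendreQ n hx).deriv, legendreQ_eq_artanh n hx, legendreP_eq_eval,
    Polynomial.deriv]
  have hne := one_sub_sq_ne_zero hx
  field_simp
  linear_combination hLagrange

theorem wronskian_one_sub_sq_pow_mul_iteratedDeriv_legendre_ne_zero {n p : ℕ} (hp : p ≤ n)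
    (hx : x ∈ Ioo (-1 : ℝ) 1) :
    wronskian (fun t => (1 - t ^ 2) ^ p * iteratedDeriv p (legendreP n) t)
      (fun t => (1 - t ^ 2) ^ p * iteratedDeriv p (legendreQ n) t) x ≠ 0 := by
  rw [(isGegenbauerSolution_legendreP n).wronskian_one_sub_sq_pow_mul_iteratedDeriv
    (isGegenbauerSolution_legendreQ n) p hx]
  have hfactor : ∀ j ∈ Finset.range p, (n * (n + 1) + j * -2 - j * (j - 1) : ℝ) ≠ 0 := by
    intro j hj
    have hlt : (j : ℝ) < n := by exact_mod_cast (Finset.mem_range.1 hj).trans_le hp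
    rw [show (n * (n + 1) + j * -2 - j * (j - 1) : ℝ) = (n - j) * (n + j + 1) by ring]
    exact mul_ne_zero (sub_ne_zero.2 hlt.ne') (by positivity)
  have hPQ := right_ne_zero_of_mul_eq_one (one_sub_sq_mul_wronskian_legendreP_legendreQ n hx)
  exact mul_ne_zero (pow_ne_zero p (one_sub_sq_ne_zero hx))
    (mul_ne_zero (Finset.prod_ne_zero_iff.2 hfactor) hPQ)

end LegendreSecondKind

/-- for `0 ≤ p ≤ ν`, `A = (1-τ²)^p P_ν^{(p)}` and `B = (1-τ²)^p q_ν^{(p)}`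
are linearly independent solutions of the master ODE on `(-1,1)`, and every
twice-differentiable solution is uniquely `C·A + D·B`. -/
theorem stmt_16 (p ν : ℕ) (hp : p ≤ ν) (A B : ℝ → ℝ)
    (hA : A = fun τ => (1 - τ ^ 2) ^ p * iteratedDeriv p (legendreP ν) τ)
    (hB : B = fun τ => (1 - τ ^ 2) ^ p * iteratedDeriv p (legendreQ ν) τ) :
    (∀ τ ∈ Set.Ioo (-1 : ℝ) 1,
      (1 - τ ^ 2) * deriv (deriv A) τ + 2 * ((p : ℝ) - 1) * τ * deriv A τ
        + ((ν : ℝ) * ((ν : ℝ) + 1) - (p : ℝ) * ((p : ℝ) - 1)) * A τ = 0) ∧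
    (∀ τ ∈ Set.Ioo (-1 : ℝ) 1,
      (1 - τ ^ 2) * deriv (deriv B) τ + 2 * ((p : ℝ) - 1) * τ * deriv B τ
        + ((ν : ℝ) * ((ν : ℝ) + 1) - (p : ℝ) * ((p : ℝ) - 1)) * B τ = 0) ∧
    (∀ C D : ℝ, (∀ τ ∈ Set.Ioo (-1 : ℝ) 1, C * A τ + D * B τ = 0) → C = 0 ∧ D = 0) ∧
    (∀ a : ℝ → ℝ,
      (∀ τ ∈ Set.Ioo (-1 : ℝ) 1,
        DifferentiableAt ℝ a τ ∧ DifferentiableAt ℝ (deriv a) τ) →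
      (∀ τ ∈ Set.Ioo (-1 : ℝ) 1,
        (1 - τ ^ 2) * deriv (deriv a) τ + 2 * ((p : ℝ) - 1) * τ * deriv a τ
          + ((ν : ℝ) * ((ν : ℝ) + 1) - (p : ℝ) * ((p : ℝ) - 1)) * a τ = 0) →
      ∃! CD : ℝ × ℝ, ∀ τ ∈ Set.Ioo (-1 : ℝ) 1, a τ = CD.1 * A τ + CD.2 * B τ) := by
  have solA : IsGegenbauerSolution (2 * (p - 1)) (ν * (ν + 1) - p * (p - 1)) A :=
    hA ▸ (isGegenbauerSolution_legendreP ν).one_sub_sq_pow_mul_iteratedDeriv p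
  have solB : IsGegenbauerSolution (2 * (p - 1)) (ν * (ν + 1) - p * (p - 1)) B :=
    hB ▸ (isGegenbauerSolution_legendreQ ν).one_sub_sq_pow_mul_iteratedDeriv p
  have hW : ∀ τ ∈ Ioo (-1 : ℝ) 1, wronskian A B τ ≠ 0 := fun τ hτ => by
    rw [hA, hB]
    exact wronskian_one_sub_sq_pow_mul_iteratedDeriv_legendre_ne_zero hp hτ
  have h0 : (0 : ℝ) ∈ Ioo (-1 : ℝ) 1 := by norm_num
  refine ⟨solA.eq_zero, solB.eq_zero, fun C D hCD => ?_, fun a ha hode => ?_⟩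
  · exact eq_zero_and_eq_zero_of_wronskian_ne_zero (isOpen_Ioo.mem_nhds h0)
      (solA.differentiableAt 0 h0) (solB.differentiableAt 0 h0) (hW 0 h0) hCD
  · have sola : IsGegenbauerSolution (2 * (p - 1)) (ν * (ν + 1) - p * (p - 1)) a :=
      ⟨fun τ hτ => (ha τ hτ).1, fun τ hτ => (ha τ hτ).2, hode⟩
    exact solA.existsUnique_eq_linearCombination isOpen_Ioo (isConnected_Ioo (by norm_num))
      (fun _ => one_sub_sq_ne_zero) solB hW sola
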